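/- Let K be a field of characteristic 2, R = K[x_1, ..., x_d] a polynomial ring, and G = Z/2Z acting linearly on R. Let S = K[x_1, ..., x_d, y_1, ..., y_d] and let I_G be the Derksen ideal of this action. Then I_G^{(n)} = I_G^n for every n ≥ 1. -/

import Mathlib

/-!
The two components of the Derksen ideal of a group with two elements are generated by linear forms.
Any two subspaces of a vector space are spanned by subsets of one common basis, so a linear change
of variables turns the components into ideals `P` and `Q` generated by variables. The least degree
in the generators of `P` of a monomial of `f` is additive in `f` and is at least `n` iff `f ∈ Pⁿ`;
hence `Pⁿ` is primary, and the symbolic power lies in `Pⁿ ⊓ Qⁿ`. A monomial of `Pⁿ ⊓ Qⁿ` is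
divisible by one of degree exactly one in the generators of `P` and in those of `Q`, so splitting
off such factors one at a time yields `Pⁿ ⊓ Qⁿ = (P ⊓ Q)ⁿ`.
-/


open MvPolynomial

/-- The `n`-th symbolic power of an ideal `I`:
`I^{(n)} = ⋂_{p ∈ Ass(A/I)} (Iⁿ A_p ∩ A)`. -/
noncomputable def symbolicPower {A : Type*} [CommRing A] (I : Ideal A) (n : ℕ) : Ideal A :=
  ⨅ (p : Ideal A) (hp : p ∈ associatedPrimes A (A ⧸ I)),
    haveI : p.IsPrime := hp.isPrime
    Ideal.comap (algebraMap A (Localization.AtPrime p))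
      (Ideal.map (algebraMap A (Localization.AtPrime p)) (I ^ n))

/-- The component `(y₁ - g(x₁), …, y_d - g(x_d))` of the Derksen ideal, in
`S = K[x₁, …, x_d, y₁, …, y_d]`, where the `x`-variables are indexed by `Sum.inl`
and the `y`-variables by `Sum.inr`. -/
noncomputable def derksenComponent (K : Type*) [Field K] (d : ℕ) {G : Type*} [Group G]
    [MulSemiringAction G (MvPolynomial (Fin d) K)] (g : G) :
    Ideal (MvPolynomial (Fin d ⊕ Fin d) K) :=
  Ideal.span (Set.range fun i : Fin d =>
    X (Sum.inr i) - rename Sum.inl (g • (X i : MvPolynomial (Fin d) K)))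

/-- The Derksen ideal `I_G = ⋂_{g ∈ G} (y₁ - g(x₁), …, y_d - g(x_d))`. -/
noncomputable def derksenIdeal (K : Type*) [Field K] (d : ℕ) (G : Type*) [Group G]
    [MulSemiringAction G (MvPolynomial (Fin d) K)] :
    Ideal (MvPolynomial (Fin d ⊕ Fin d) K) :=
  ⨅ g : G, derksenComponent K d g


section VariableIdeals

variable {R ι : Type*} [CommSemiring R] {T T' : Set ι} {n : ℕ} {f : MvPolynomial ι R}
  {m : ι →₀ ℕ}

variable (R) in
/-- The ideal of `R[X_i : i ∈ ι]` generated by the variables with index in `T`. -/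
noncomputable def varIdeal (T : Set ι) : Ideal (MvPolynomial ι R) :=
  Ideal.span (X '' T)

/-- The degree, in the variables with index in `T`, of the monomial with exponent vector `m`. -/
noncomputable def degreeIn (T : Set ι) (m : ι →₀ ℕ) : ℕ :=
  Finsupp.weight (T.indicator 1) m

/-- The least degree in the variables with index in `T` among the monomials of `f`, with value `⊤`
at `f = 0`. It is taken from power series, where the weighted order is known to be additive. -/
noncomputable def orderIn (T : Set ι) (f : MvPolynomial ι R) : ℕ∞ :=
  (f : MvPowerSeries ι R).weightedOrder (T.indicator 1)

lemma degreeIn_add (T : Set ι) (m m' : ι →₀ ℕ) :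
    degreeIn T (m + m') = degreeIn T m + degreeIn T m' :=
  map_add _ m m'

lemma degreeIn_single_one (T : Set ι) (i : ι) :
    degreeIn T (Finsupp.single i 1) = T.indicator 1 i := by
  simp only [degreeIn, Finsupp.weight_single, one_smul]

lemma degreeIn_ne_zero_iff : degreeIn T m ≠ 0 ↔ ∃ i ∈ T, m i ≠ 0 := by
  classical
  simp only [degreeIn, Finsupp.weight_apply, Finsupp.sum, Set.indicator_apply, Pi.one_apply,
    smul_eq_mul, mul_ite, mul_one, mul_zero, ne_eq, Finset.sum_eq_zero_iff,
    Finsupp.mem_support_iff, ite_eq_right_iff, not_forall]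
  grind

lemma natCast_le_orderIn_iff : n ≤ orderIn T f ↔ ∀ m ∈ f.support, n ≤ degreeIn T m := by
  refine ⟨fun h m hm => ?_, fun h => MvPowerSeries.nat_le_weightedOrder _ fun m hm => ?_⟩
  · exact_mod_cast h.trans (MvPowerSeries.weightedOrder_le _ (by simpa using hm))
  · rw [coeff_coe, ← notMem_support_iff]
    exact fun hm' => hm.not_ge (h m hm')

lemma orderIn_one [Nontrivial R] (T : Set ι) : orderIn T (1 : MvPolynomial ι R) = 0 := by
  rw [orderIn, coe_one, MvPowerSeries.weightedOrder_one]

lemma orderIn_add_le_orderIn_mul (T : Set ι) (f g : MvPolynomial ι R) :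
    orderIn T f + orderIn T g ≤ orderIn T (f * g) := by
  simpa only [orderIn, coe_mul] using MvPowerSeries.le_weightedOrder_mul _

lemma orderIn_mul [NoZeroDivisors R] (T : Set ι) (f g : MvPolynomial ι R) :
    orderIn T (f * g) = orderIn T f + orderIn T g := by
  simp only [orderIn, coe_mul, MvPowerSeries.weightedOrder_mul]

lemma mem_varIdeal_iff : f ∈ varIdeal R T ↔ 1 ≤ orderIn T f := by
  rw [varIdeal, mem_ideal_span_X_image, ← Nat.cast_one, natCast_le_orderIn_iff]
  simp only [Nat.one_le_iff_ne_zero, degreeIn_ne_zero_iff]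

lemma exists_le_degreeIn_eq_one (h : degreeIn T m ≠ 0) (h' : degreeIn T' m ≠ 0) :
    ∃ v ≤ m, degreeIn T v = 1 ∧ degreeIn T' v = 1 := by
  classical
  obtain ⟨i, hi, him⟩ := degreeIn_ne_zero_iff.1 h
  obtain ⟨j, hj, hjm⟩ := degreeIn_ne_zero_iff.1 h'
  by_cases hi' : i ∈ T'
  · exact ⟨Finsupp.single i 1, by simpa [Nat.one_le_iff_ne_zero] using him,
      by simp [degreeIn_single_one, hi], by simp [degreeIn_single_one, hi']⟩
  by_cases hj' : j ∈ T
  · exact ⟨Finsupp.single j 1, by simpa [Nat.one_le_iff_ne_zero] using hjm,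
      by simp [degreeIn_single_one, hj'], by simp [degreeIn_single_one, hj]⟩
  have hij : i ≠ j := fun hij => hi' (hij ▸ hj)
  refine ⟨Finsupp.single i 1 + Finsupp.single j 1, fun k => ?_, ?_, ?_⟩
  · simp only [Finsupp.add_apply, Finsupp.single_apply]
    grind
  · simp [degreeIn_add, degreeIn_single_one, hi, hj']
  · simp [degreeIn_add, degreeIn_single_one, hi', hj]

lemma monomial_mem_varIdeal (h : degreeIn T m ≠ 0) (a : R) :
    monomial m a ∈ varIdeal R T := by
  classical
  obtain ⟨i, hi, him⟩ := degreeIn_ne_zero_iff.1 h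
  exact mem_ideal_span_X_image.2 fun m' hm' =>
    ⟨i, hi, by rwa [Finset.mem_singleton.1 (support_monomial_subset hm')]⟩

lemma monomial_mem_varIdeal_inf_pow (h : n ≤ degreeIn T m) (h' : n ≤ degreeIn T' m) (a : R) :
    monomial m a ∈ (varIdeal R T ⊓ varIdeal R T') ^ n := by
  induction n generalizing m with
  | zero => simp
  | succ n ih =>
    obtain ⟨v, hvm, hv, hv'⟩ :=
      exists_le_degreeIn_eq_one (Nat.ne_zero_of_lt h) (Nat.ne_zero_of_lt h')
    obtain ⟨u, rfl⟩ := exists_add_of_le hvm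
    rw [degreeIn_add] at h h'
    have hmul : monomial (v + u) a = monomial v 1 * monomial u a := by
      rw [monomial_mul, one_mul]
    rw [hmul, pow_succ']
    exact Ideal.mul_mem_mul
      ⟨monomial_mem_varIdeal (by lia) 1, monomial_mem_varIdeal (by lia) 1⟩
      (ih (by lia) (by lia))

lemma natCast_le_orderIn_of_mem_varIdeal_pow (hf : f ∈ varIdeal R T ^ n) : n ≤ orderIn T f := by
  induction hf using Submodule.pow_induction_on_left' with
  | algebraMap f => simp
  | add f g n _ _ hf hg =>
    exact (le_min hf hg).trans (MvPowerSeries.min_weightedOrder_le_add _)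
  | mem_mul f hf n g _ hg =>
    calc ((n + 1 : ℕ) : ℕ∞) = 1 + n := by push_cast; ring
      _ ≤ orderIn T f + orderIn T g := add_le_add (mem_varIdeal_iff.1 hf) hg
      _ ≤ orderIn T (f * g) := orderIn_add_le_orderIn_mul T f g

lemma mem_varIdeal_inf_pow_of_le_orderIn (h : n ≤ orderIn T f) (h' : n ≤ orderIn T' f) :
    f ∈ (varIdeal R T ⊓ varIdeal R T') ^ n := by
  rw [natCast_le_orderIn_iff] at h h'
  rw [f.as_sum]
  exact Ideal.sum_mem _ fun m hm => monomial_mem_varIdeal_inf_pow (h m hm) (h' m hm) _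

lemma mem_varIdeal_pow_iff : f ∈ varIdeal R T ^ n ↔ n ≤ orderIn T f :=
  ⟨natCast_le_orderIn_of_mem_varIdeal_pow, fun h => by
    simpa only [inf_idem] using mem_varIdeal_inf_pow_of_le_orderIn h h⟩

lemma varIdeal_inf_pow (T T' : Set ι) (n : ℕ) :
    (varIdeal R T ⊓ varIdeal R T') ^ n = varIdeal R T ^ n ⊓ varIdeal R T' ^ n :=
  le_antisymm (le_inf (Ideal.pow_right_mono inf_le_left n) (Ideal.pow_right_mono inf_le_right n))
    fun _ hf => mem_varIdeal_inf_pow_of_le_orderIn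
      (mem_varIdeal_pow_iff.1 hf.1) (mem_varIdeal_pow_iff.1 hf.2)

variable [Nontrivial R] [NoZeroDivisors R]

instance varIdeal_isPrime (T : Set ι) : (varIdeal R T).IsPrime where
  ne_top' h := by
    have h1 : (1 : MvPolynomial ι R) ∈ varIdeal R T := h ▸ Submodule.mem_top
    simp [mem_varIdeal_iff, orderIn_one] at h1
  mem_or_mem' {f g} hfg := by
    simp only [mem_varIdeal_iff, orderIn_mul, Order.one_le_iff_pos] at hfg ⊢
    simpa only [add_pos_iff] using hfg

lemma isPrimary_varIdeal_pow (T : Set ι) (hn : n ≠ 0) : (varIdeal R T ^ n).IsPrimary := by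
  have hradical : (varIdeal R T ^ n).radical = varIdeal R T := by
    rw [Ideal.radical_pow _ hn, (varIdeal_isPrime T).radical]
  refine Ideal.isPrimary_iff.2 ⟨fun htop => ?_, fun {f g} hfg => ?_⟩
  · exact (varIdeal_isPrime T).ne_top (by rw [← hradical, htop, Ideal.radical_top])
  · rw [hradical, or_iff_not_imp_right, mem_varIdeal_iff, Order.one_le_iff_pos, not_lt,
      nonpos_iff_eq_zero]
    intro hg
    rwa [mem_varIdeal_pow_iff, orderIn_mul, hg, add_zero, ← mem_varIdeal_pow_iff] at hfg

end VariableIdeals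

section SymbolicPower

variable {A : Type*} [CommRing A] {I J P Q : Ideal A} {n : ℕ}

lemma pow_le_symbolicPower (I : Ideal A) (n : ℕ) : I ^ n ≤ symbolicPower I n :=
  le_iInf₂ fun _ _ => Ideal.le_comap_map

lemma symbolicPower_le_of_isPrimary (hJ : J.IsPrimary)
    (hass : J.radical ∈ associatedPrimes A (A ⧸ I)) (hIJ : I ^ n ≤ J) :
    symbolicPower I n ≤ J := by
  have : J.radical.IsPrime := hass.isPrime
  refine (iInf₂_le J.radical hass).trans fun f hf => ?_
  rw [Ideal.mem_comap,
    IsLocalization.algebraMap_mem_map_algebraMap_iff J.radical.primeCompl] at hf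
  obtain ⟨s, hs, hsf⟩ := hf
  rw [mul_comm] at hsf
  exact ((Ideal.isPrimary_iff.1 hJ).2 (hIJ hsf)).resolve_right hs

lemma symbolicPower_le_pow [IsNoetherianRing A] [P.IsPrime] (hIP : I ≤ P)
    (hprimary : ∀ p ∈ I.minimalPrimes, (p ^ n).IsPrimary) : symbolicPower I n ≤ P ^ n := by
  obtain ⟨p, hp, hpP⟩ := Ideal.exists_minimalPrimes_le hIP
  have hn : n ≠ 0 := by
    rintro rfl
    exact (hprimary p hp).ne_top (by simp)
  have hradical : (p ^ n).radical = p := by rw [Ideal.radical_pow _ hn, hp.1.1.radical]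
  have hass : p ∈ associatedPrimes A (A ⧸ I) :=
    Module.associatedPrimes.minimalPrimes_annihilator_subset_associatedPrimes A (A ⧸ I)
      (by rwa [Ideal.annihilator_quotient])
  exact (symbolicPower_le_of_isPrimary (hprimary p hp) (hradical.symm ▸ hass)
    (Ideal.pow_right_mono hp.1.2 n)).trans (Ideal.pow_right_mono hpP n)

lemma eq_or_eq_of_mem_minimalPrimes_inf [P.IsPrime] [Q.IsPrime] {p : Ideal A}
    (hp : p ∈ (P ⊓ Q).minimalPrimes) : p = P ∨ p = Q :=
  (hp.1.1.inf_le.1 hp.1.2).imp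
    (fun h => (hp.2 ⟨‹P.IsPrime›, inf_le_left⟩ h).antisymm h)
    (fun h => (hp.2 ⟨‹Q.IsPrime›, inf_le_right⟩ h).antisymm h)

lemma symbolicPower_inf_eq_pow [IsNoetherianRing A] [P.IsPrime] [Q.IsPrime]
    (hP : (P ^ n).IsPrimary) (hQ : (Q ^ n).IsPrimary) (hPQ : P ^ n ⊓ Q ^ n ≤ (P ⊓ Q) ^ n) :
    symbolicPower (P ⊓ Q) n = (P ⊓ Q) ^ n := by
  have hprimary : ∀ p ∈ (P ⊓ Q).minimalPrimes, (p ^ n).IsPrimary := fun p hp => by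
    rcases eq_or_eq_of_mem_minimalPrimes_inf hp with rfl | rfl <;> assumption
  exact le_antisymm
    ((le_inf (symbolicPower_le_pow inf_le_left hprimary)
      (symbolicPower_le_pow inf_le_right hprimary)).trans hPQ)
    (pow_le_symbolicPower _ n)

end SymbolicPower

section AdaptedBasis

variable {K V : Type*} [DivisionRing K] [AddCommGroup V] [Module K V]

lemma exists_linearIndepOn_union_span_eq (W W' : Submodule K V) :
    ∃ B B' : Set V, LinearIndepOn K id (B ∪ B') ∧
      Submodule.span K B = W ∧ Submodule.span K B' = W' := by
  obtain ⟨B₀, hB₀_sub, -, hB₀_span, hB₀⟩ := exists_linearIndepOn_id_extension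
    (linearIndepOn_empty K (id : V → V)) (Set.empty_subset ((W ⊓ W' : Submodule K V) : Set V))
  obtain ⟨B, hB_sub, hB₀B, hB_span, hB⟩ := exists_linearIndepOn_id_extension hB₀
    (hB₀_sub.trans (show _ ⊆ (W : Set V) from inf_le_left))
  obtain ⟨D, hD_sub, hBD, hD_span, hD⟩ := exists_linearIndepOn_id_extension hB
    (Set.subset_union_left (t := (W' : Set V)))
  have hdiff : D \ B ⊆ W' := fun x hx => (hD_sub hx.1).resolve_left hx.2
  refine ⟨B, B₀ ∪ D \ B, hD.mono ?_, ?_, ?_⟩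
  · exact Set.union_subset hBD (Set.union_subset (hB₀B.trans hBD) Set.sdiff_subset)
  · exact le_antisymm (Submodule.span_le.2 hB_sub) hB_span
  refine le_antisymm (Submodule.span_le.2 (Set.union_subset (fun x hx => (hB₀_sub hx).2) hdiff))
    fun w hw => ?_
  have hw_span : w ∈ Submodule.span K (B ∪ D \ B) := by
    rw [Set.union_sdiff_cancel hBD]
    exact hD_span (Or.inr hw)
  rw [Submodule.span_union, Submodule.mem_sup] at hw_span ⊢
  obtain ⟨u, hu, v, hv, rfl⟩ := hw_span
  have huW : u ∈ W := Submodule.span_le.2 hB_sub hu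
  have huW' : u ∈ W' := (W'.add_mem_iff_left (Submodule.span_le.2 hdiff hv)).1 hw
  exact ⟨u, hB₀_span ⟨huW, huW'⟩, v, hv, rfl⟩

lemma exists_basis_span_image_eq (W W' : Submodule K V) :
    ∃ (B : Set V) (b : Module.Basis B K V) (T T' : Set B),
      Submodule.span K (b '' T) = W ∧ Submodule.span K (b '' T') = W' := by
  obtain ⟨B, B', hBB', rfl, rfl⟩ := exists_linearIndepOn_union_span_eq W W'
  have himage : ∀ D ⊆ B ∪ B', Module.Basis.extend hBB' '' ((↑) ⁻¹' D) = D := fun D hD => by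
    rw [Module.Basis.coe_extend, Subtype.image_preimage_coe,
      Set.inter_eq_right.2 (hD.trans (Module.Basis.subset_extend hBB'))]
  exact ⟨_, Module.Basis.extend hBB', (↑) ⁻¹' B, (↑) ⁻¹' B',
    by rw [himage B Set.subset_union_left], by rw [himage B' Set.subset_union_right]⟩

end AdaptedBasis

section RingEquiv

variable {A B : Type*} [CommSemiring A] [CommSemiring B] {I : Ideal A}

lemma isPrimary_map_of_equiv (hI : I.IsPrimary) (e : A ≃+* B) : (I.map e).IsPrimary := by
  rw [← Ideal.comap_symm]
  exact hI.comap (e.symm : B →+* A)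

lemma map_inf_of_equiv (e : A ≃+* B) (I J : Ideal A) :
    (I ⊓ J).map e = I.map e ⊓ J.map e := by
  simp only [← Ideal.comap_symm, Ideal.comap_inf]

end RingEquiv

section LinearForms

lemma exists_algEquiv_X_eq_basis {R σ κ : Type*} [CommSemiring R]
    (b : Module.Basis κ R (homogeneousSubmodule σ R 1)) :
    ∃ e : MvPolynomial κ R ≃ₐ[R] MvPolynomial σ R, ∀ k, e (X k) = b k := by
  let bX : Module.Basis σ R (homogeneousSubmodule σ R 1) :=
    (Module.Basis.span (linearIndependent_X σ R)).map
      (LinearEquiv.ofEq _ _ homogeneousSubmodule_one_eq_span_X.symm)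
  have hbX : ∀ i, (bX i : MvPolynomial σ R) = X i := fun i => by
    simp [bX, Module.Basis.span_apply]
  let e := (SymmetricAlgebra.equivMvPolynomial b).symm.trans (SymmetricAlgebra.equivMvPolynomial bX)
  have hι : (SymmetricAlgebra.equivMvPolynomial bX).toLinearMap ∘ₗ SymmetricAlgebra.ι R _ =
      (homogeneousSubmodule σ R 1).subtype :=
    bX.ext fun i => by simp [hbX]
  exact ⟨e, fun k => by simpa [e] using LinearMap.congr_fun hι (b k)⟩

variable {K σ : Type*} [Field K]

lemma exists_ringEquiv_map_varIdeal_eq {W W' : Submodule K (MvPolynomial σ K)}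
    (hW : W ≤ homogeneousSubmodule σ K 1) (hW' : W' ≤ homogeneousSubmodule σ K 1) :
    ∃ (B : Set (homogeneousSubmodule σ K 1)) (e : MvPolynomial B K ≃+* MvPolynomial σ K)
      (T T' : Set B),
      (varIdeal K T).map e = Ideal.span W ∧ (varIdeal K T').map e = Ideal.span W' := by
  let ι₁ := (homogeneousSubmodule σ K 1).subtype
  obtain ⟨B, b, T, T', hT, hT'⟩ := exists_basis_span_image_eq (W.comap ι₁) (W'.comap ι₁)
  obtain ⟨e, he⟩ := exists_algEquiv_X_eq_basis b
  have hmap : ∀ {T : Set B} {W : Submodule K (MvPolynomial σ K)},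
      W ≤ homogeneousSubmodule σ K 1 → Submodule.span K (b '' T) = W.comap ι₁ →
      (varIdeal K T).map e.toRingEquiv = Ideal.span W := by
    intro T W hW hT
    have hspan : Submodule.span K (ι₁ '' (b '' T)) = W := by
      rw [Submodule.span_image, hT, Submodule.map_comap_subtype, inf_eq_right.2 hW]
    have himage : e.toRingEquiv '' (X '' T) = ι₁ '' (b '' T) := by
      rw [Set.image_image, Set.image_image]
      exact Set.image_congr fun k _ => he k
    rw [varIdeal, Ideal.map_span, himage, ← hspan, Ideal.span, Ideal.span,
      Submodule.span_span_of_tower]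
  exact ⟨B, e.toRingEquiv, T, T', hmap hW hT, hmap hW' hT'⟩

lemma symbolicPower_span_inf_span_eq_pow [Finite σ] {s s' : Set (MvPolynomial σ K)}
    (hs : ∀ f ∈ s, f.IsHomogeneous 1) (hs' : ∀ f ∈ s', f.IsHomogeneous 1) (n : ℕ) :
    symbolicPower (Ideal.span s ⊓ Ideal.span s') n = (Ideal.span s ⊓ Ideal.span s') ^ n := by
  rcases eq_or_ne n 0 with rfl | hn
  · exact le_antisymm (by simp) (pow_le_symbolicPower _ 0)
  have hW : Submodule.span K s ≤ homogeneousSubmodule σ K 1 := Submodule.span_le.2 hs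
  have hW' : Submodule.span K s' ≤ homogeneousSubmodule σ K 1 := Submodule.span_le.2 hs'
  obtain ⟨B, e, T, T', hT, hT'⟩ := exists_ringEquiv_map_varIdeal_eq hW hW'
  rw [Ideal.span, Submodule.span_span_of_tower] at hT hT'
  rw [Ideal.span, Ideal.span, ← hT, ← hT']
  have hprime : ∀ T : Set B, ((varIdeal K T).map e).IsPrime := fun _ => Ideal.map_isPrime_of_equiv e
  have hprimary : ∀ T : Set B, ((varIdeal K T).map e ^ n).IsPrimary := fun T => by
    rw [← Ideal.map_pow]
    exact isPrimary_map_of_equiv (isPrimary_varIdeal_pow T hn) e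
  refine symbolicPower_inf_eq_pow (hprimary T) (hprimary T') (le_of_eq ?_)
  simp only [← map_inf_of_equiv, ← Ideal.map_pow, varIdeal_inf_pow]

end LinearForms

section Derksen

variable {K : Type*} [Field K] {d : ℕ} {G : Type*} [Group G]
  [MulSemiringAction G (MvPolynomial (Fin d) K)]

lemma derksenIdeal_eq_inf_of_card_eq_two (hG : Nat.card G = 2) :
    ∃ g h : G, derksenIdeal K d G = derksenComponent K d g ⊓ derksenComponent K d h := by
  obtain ⟨g, h, -, hgh⟩ := Nat.card_eq_two_iff.1 hG
  refine ⟨g, h, ?_⟩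
  rw [derksenIdeal, ← iInf_univ, ← hgh, iInf_pair]

theorem symbolicPower_derksenIdeal_Z2_char_two_general (hG : Nat.card G = 2)
    (hlin : ∀ (g : G) (i : Fin d), (g • (X i : MvPolynomial (Fin d) K)).IsHomogeneous 1) (n : ℕ) :
    symbolicPower (derksenIdeal K d G) n = derksenIdeal K d G ^ n := by
  obtain ⟨g, h, hgh⟩ := derksenIdeal_eq_inf_of_card_eq_two (K := K) (d := d) hG
  have hgen : ∀ g : G, ∀ f ∈ Set.range fun i : Fin d =>
      (X (Sum.inr i) - rename Sum.inl (g • (X i : MvPolynomial (Fin d) K)) :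
        MvPolynomial (Fin d ⊕ Fin d) K), f.IsHomogeneous 1 := by
    rintro g _ ⟨i, rfl⟩
    exact (isHomogeneous_X K _).sub (hlin g i).rename_isHomogeneous
  rw [hgh]
  exact symbolicPower_span_inf_span_eq_pow (hgen g) (hgen h) n

end Derksen

/-- For `G = ℤ/2ℤ` acting linearly on `K[x₁, …, x_d]` with `char K = 2`, the symbolic
powers of the Derksen ideal coincide with its ordinary powers. -/
theorem symbolicPower_derksenIdeal_Z2_char_two {K : Type*} [Field K] [CharP K 2] (d : ℕ)
    [MulSemiringAction (Multiplicative (ZMod 2)) (MvPolynomial (Fin d) K)]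
    (hC : ∀ (g : Multiplicative (ZMod 2)) (a : K),
      g • (C a : MvPolynomial (Fin d) K) = C a)
    (hlin : ∀ (g : Multiplicative (ZMod 2)) (i : Fin d),
      (g • (X i : MvPolynomial (Fin d) K)).IsHomogeneous 1)
    (n : ℕ) (hn : 1 ≤ n) :
    symbolicPower (derksenIdeal K d (Multiplicative (ZMod 2))) n =
      derksenIdeal K d (Multiplicative (ZMod 2)) ^ n := by
  exact symbolicPower_derksenIdeal_Z2_char_two_general (by simp) hlin n
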